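/- arXiv:1807.03226 — 2 statements merged into one kernel-verified Lean document; each statement's English description precedes it below -/
import Mathlib

section
/- Let L be a coframe equipped with a convergence structure lim, with raw adherence adh⁰ and adherence adh(ℓ) = ⋀{adh⁰(a) | a complemented, a ≥ ℓ}. Then: (1) adh⁰(ℓ) ≤ adh(ℓ) for every ℓ ∈ L; (2) adh(a) = adh⁰(a) for every complemented a; (3) adh is monotone; (4) adh preserves finite suprema of complemented elements; (5) adh(ℓ) = ⋀{adh(a) | a complemented, a ≥ ℓ} for every ℓ ∈ L. -/
/-! The raw adherence `adh0` is monotone, since grills are upward closed, so `adh` lies above it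
and agrees with it on complemented elements (`adh_eq_adh0`). It also preserves finite suprema: if a
filter `F` meshes with `a ⊔ b` but with neither `a` nor `b`, then some `f, g ∈ F` satisfy
`f ⊓ a = ⊥ = g ⊓ b`, and distributivity makes `f ⊓ g ∈ F` disjoint from `a ⊔ b`
(`mem_grill_or_of_sup`). As complemented elements are closed under finite suprema, this passes to
`adh`. -/

/-- The grill of a subset `A` of a lattice with bottom:
`A^# = {ℓ | ∀ a ∈ A, a ⊓ ℓ ≠ ⊥}`. -/
def grill {L : Type*} [Lattice L] [OrderBot L] (A : Set L) : Set L :=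
  {l | ∀ a ∈ A, a ⊓ l ≠ ⊥}

/-- A filter on a lattice: a nonempty, upward-closed subset closed under binary meets. -/
def IsLatFilter {L : Type*} [Lattice L] (F : Set L) : Prop :=
  F.Nonempty ∧ (∀ x ∈ F, ∀ y : L, x ≤ y → y ∈ F) ∧ ∀ x ∈ F, ∀ y ∈ F, x ⊓ y ∈ F

/-- A convergence structure on a lattice: a map on subsets, monotone on filters. -/
def ConvMono {L : Type*} [Lattice L] (lim : Set L → L) : Prop :=
  ∀ F G : Set L, IsLatFilter F → IsLatFilter G → F ⊆ G → lim F ≤ lim G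

/-- An element `a` of a bounded lattice is complemented if it has a complement. -/
def Cmpl {L : Type*} [Lattice L] [BoundedOrder L] (a : L) : Prop :=
  ∃ b : L, a ⊔ b = ⊤ ∧ a ⊓ b = ⊥

/-- The raw adherence of a convergence structure:
`adh⁰ ℓ = ⋁ {lim F | F a filter with ℓ ∈ F^#}`. -/
def adh0 {L : Type*} [Order.Coframe L] (lim : Set L → L) (l : L) : L :=
  sSup {x | ∃ F : Set L, IsLatFilter F ∧ l ∈ grill F ∧ x = lim F}

/-- The adherence of a convergence structure:
`adh ℓ = ⋀ {adh⁰ a | a complemented, a ≥ ℓ}`. -/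
def adh {L : Type*} [Order.Coframe L] (lim : Set L → L) (l : L) : L :=
  sInf {x | ∃ a : L, Cmpl a ∧ l ≤ a ∧ x = adh0 lim a}

theorem adh0_mono {L : Type*} [Order.Coframe L] (lim : Set L → L) : Monotone (adh0 lim) := by
  intro a b hab
  apply sSup_le_sSup
  rintro x ⟨F, hF, ha, rfl⟩
  exact ⟨F, hF, fun f hf h => ha f hf (le_bot_iff.1 (h ▸ inf_le_inf_left f hab)), rfl⟩

theorem adh_eq_adh0 {L : Type*} [Order.Coframe L] (lim : Set L → L) {a : L} (ha : Cmpl a) :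
    adh lim a = adh0 lim a := by
  apply le_antisymm
  · exact sInf_le ⟨a, ha, le_rfl, rfl⟩
  · apply le_sInf
    rintro x ⟨b, -, hab, rfl⟩
    exact adh0_mono lim hab

/-- The grill of a filter is prime; neither `a` nor `b` need be complemented. -/
theorem mem_grill_or_of_sup {L : Type*} [Order.Coframe L] {F : Set L} (hF : IsLatFilter F)
    {a b : L} (h : a ⊔ b ∈ grill F) : a ∈ grill F ∨ b ∈ grill F := by
  by_contra hc
  simp only [grill, Set.mem_ofPred_eq, not_or, not_forall, not_not] at hc
  obtain ⟨⟨f, hf, hfa⟩, g, hg, hgb⟩ := hc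
  refine h (f ⊓ g) (hF.2.2 f hf g hg) ?_
  rw [inf_sup_left, inf_right_comm, hfa, inf_assoc, hgb, bot_inf_eq, inf_bot_eq, sup_bot_eq]

theorem adh0_bot {L : Type*} [Order.Coframe L] (lim : Set L → L) : adh0 lim ⊥ = ⊥ := by
  rw [eq_bot_iff]
  apply sSup_le
  rintro x ⟨F, ⟨⟨f, hf⟩, -⟩, h, -⟩
  exact absurd (inf_bot_eq f) (h f hf)

theorem adh0_sup {L : Type*} [Order.Coframe L] (lim : Set L → L) (a b : L) :
    adh0 lim (a ⊔ b) = adh0 lim a ⊔ adh0 lim b := by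
  apply le_antisymm
  · apply sSup_le
    rintro x ⟨F, hF, h, rfl⟩
    rcases mem_grill_or_of_sup hF h with h | h
    · exact le_sup_of_le_left (le_sSup ⟨F, hF, h, rfl⟩)
    · exact le_sup_of_le_right (le_sSup ⟨F, hF, h, rfl⟩)
  · exact (adh0_mono lim).le_map_sup a b

theorem cmpl_finset_sup {L ι : Type*} [Order.Coframe L] (s : Finset ι) {a : ι → L}
    (ha : ∀ i, Cmpl (a i)) : Cmpl (s.sup a) := by
  refine Finset.sup_induction (p := Cmpl) ⟨⊤, bot_sup_eq _, bot_inf_eq _⟩ ?_ fun i _ => ha i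
  rintro x ⟨x', hx, hx'⟩ y ⟨y', hy, hy'⟩
  have h := (IsCompl.of_eq hx' hx).sup_inf (IsCompl.of_eq hy' hy)
  exact ⟨x' ⊓ y', h.sup_eq_top, h.inf_eq_bot⟩

theorem stmt9 {L : Type*} [Order.Coframe L] (lim : Set L → L) (hlim : ConvMono lim) :
    -- (1) adh⁰ ℓ ≤ adh ℓ
    (∀ l : L, adh0 lim l ≤ adh lim l) ∧
    -- (2) adh and adh⁰ coincide on complemented elements
    (∀ a : L, Cmpl a → adh lim a = adh0 lim a) ∧
    -- (3) adh is monotone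
    Monotone (adh lim) ∧
    -- (4) adh preserves finite suprema of complemented elements
    (∀ (n : ℕ) (a : Fin n → L), (∀ i, Cmpl (a i)) →
      adh lim (Finset.univ.sup a) = Finset.univ.sup fun i => adh lim (a i)) ∧
    -- (5) adh ℓ = ⋀ {adh a | a complemented, a ≥ ℓ}
    (∀ l : L, adh lim l = sInf {x | ∃ a : L, Cmpl a ∧ l ≤ a ∧ x = adh lim a}) := by
  refine ⟨?_, fun a ha => adh_eq_adh0 lim ha, ?_, ?_, ?_⟩
  · intro l
    apply le_sInf
    rintro x ⟨b, -, hb, rfl⟩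
    exact adh0_mono lim hb
  · intro l m hlm
    apply sInf_le_sInf
    rintro x ⟨b, hb, hmb, rfl⟩
    exact ⟨b, hb, hlm.trans hmb, rfl⟩
  · intro n a ha
    rw [adh_eq_adh0 lim (cmpl_finset_sup _ ha),
      Finset.apply_sup_eq_sup_comp (adh0 lim) (adh0_sup lim) (adh0_bot lim)]
    exact Finset.sup_congr rfl fun i _ => (adh_eq_adh0 lim (ha i)).symm
  · intro l
    refine congrArg sInf (Set.ext fun x => exists_congr fun a => and_congr_right fun ha => ?_)
    rw [adh_eq_adh0 lim ha]
end

section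
/- Let L and L′ be coframes equipped with convergence structures lim_L and lim_{L′}, and let φ : L → L′ be a continuous coframe morphism with left adjoint φ_!. Then for every ℓ′ ∈ L′: φ_!(adh⁰_{L′}(ℓ′)) ≤ adh⁰_L(φ_!(ℓ′)), and adh⁰_{L′}(ℓ′) ≤ φ(adh⁰_L(φ_!(ℓ′))). -/
/-- A coframe morphism: preserves arbitrary infima and finite suprema. -/
def IsCoframeHom {L L' : Type*} [Order.Coframe L] [Order.Coframe L'] (φ : L → L') : Prop :=
  (∀ S : Set L, φ (sInf S) = sInf (φ '' S)) ∧ (φ ⊥ = ⊥) ∧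
    ∀ x y : L, φ (x ⊔ y) = φ x ⊔ φ y

/-- Continuity of `φ : L → L′`: for every filter `F` on `L′`,
`limL' F ≤ φ (limL (φ⁻¹ F))`. -/
def Contin {L L' : Type*} [Lattice L] [Lattice L']
    (limL : Set L → L) (limL' : Set L' → L') (φ : L → L') : Prop :=
  ∀ F : Set L', IsLatFilter F → limL' F ≤ φ (limL (φ ⁻¹' F))

theorem IsLatFilter.preimage {L L' : Type*} [Order.Coframe L] [Order.Coframe L']
    {φexc : L' → L} {φ : L → L'} (gc : GaloisConnection φexc φ) {F : Set L'}
    (hF : IsLatFilter F) : IsLatFilter (φ ⁻¹' F) := by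
  obtain ⟨⟨a, ha⟩, hup, hinf⟩ := hF
  refine ⟨⟨⊤, ?_⟩, fun x hx y hxy => hup _ hx _ (gc.monotone_u hxy), fun x hx y hy => ?_⟩
  · exact hup a ha _ (gc.u_top ▸ le_top)
  · change φ (x ⊓ y) ∈ F
    rw [gc.u_inf]
    exact hinf _ hx _ hy

/-- The left adjoint carries elements meshing with `F` to elements meshing with `φ⁻¹ F`. -/
theorem mem_grill_preimage {L L' : Type*} [Order.Coframe L] [Order.Coframe L']
    {φexc : L' → L} {φ : L → L'} (gc : GaloisConnection φexc φ) (hbot : φ ⊥ = ⊥)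
    {F : Set L'} {l' : L'} (hl : l' ∈ grill F) : φexc l' ∈ grill (φ ⁻¹' F) := by
  intro x hx h
  refine hl (φ x) hx (le_bot_iff.mp ?_)
  calc φ x ⊓ l' ≤ φ x ⊓ φ (φexc l') := inf_le_inf_left _ (gc.le_u_l l')
    _ = φ (x ⊓ φexc l') := gc.u_inf.symm
    _ = ⊥ := by rw [h, hbot]

/-- Images of raw adherences under a continuous coframe morphism. -/
theorem stmt11 {L L' : Type*} [Order.Coframe L] [Order.Coframe L']
    (limL : Set L → L) (limL' : Set L' → L')
    (hL : ConvMono limL) (hL' : ConvMono limL')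
    (φ : L → L') (hφ : IsCoframeHom φ)
    (φexc : L' → L) (hadj : ∀ (l' : L') (l : L), φexc l' ≤ l ↔ l' ≤ φ l)
    (hcont : Contin limL limL' φ) :
    ∀ l' : L',
      φexc (adh0 limL' l') ≤ adh0 limL (φexc l') ∧
      adh0 limL' l' ≤ φ (adh0 limL (φexc l')) := by
  intro l'
  have gc : GaloisConnection φexc φ := hadj
  have key : adh0 limL' l' ≤ φ (adh0 limL (φexc l')) := by
    refine sSup_le ?_
    rintro _ ⟨F, hF, hl, rfl⟩
    exact (hcont F hF).trans (gc.monotone_u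
      (le_sSup ⟨_, hF.preimage gc, mem_grill_preimage gc hφ.2.1 hl, rfl⟩))
  exact ⟨(hadj _ _).mpr key, key⟩
end
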